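/- Let f : ℝ → ℝ be twice continuously differentiable on (0,∞) with f''(x) > 0 for all x > 0 and f(1) = 0, with d_f(s) = ((1-s)/2)·f((1+s)/(1-s)) + ((1+s)/2)·f((1-s)/(1+s)). Let (Ω, μ) be a measure space, p, q : Ω → ℝ measurable with p, q > 0 everywhere and ∫ p dμ = ∫ q dμ = 1, assume the symmetric f-divergence integrand is μ-integrable with D̃_f = (1/2)∫ (q·f(p/q) + p·f(q/p)) dμ, and assume (1/2)∫|p−q| dμ < 1. Let X : Ω → ℝ be measurable with |X| ≤ M for some M > 0, with X·p and X·q μ-integrable. Then d_f( |∫ X·p dμ − ∫ X·q dμ| / (2M) ) ≤ D̃_f. -/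

import Mathlib

open MeasureTheory

/-- The binary symmetric f-divergence. -/
noncomputable def binDiv (f : ℝ → ℝ) (s : ℝ) : ℝ :=
  ((1 - s) / 2) * f ((1 + s) / (1 - s)) + ((1 + s) / 2) * f ((1 - s) / (1 + s))

/-- Tangent line inequality for a function with positive second derivative. -/
theorem tangent_le_aux (f : ℝ → ℝ)
    (hf : ContDiffOn ℝ 2 f (Set.Ioi 0))
    (hf'' : ∀ x : ℝ, 0 < x → 0 < deriv (deriv f) x) (x y : ℝ) (hx : 0 < x) (hy : 0 < y) :
    f x + deriv f x * (y - x) ≤ f y := by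
  have hd : ∀ z : ℝ, 0 < z → HasDerivAt f (deriv f z) z := fun z hz =>
    ((hf.contDiffAt (Ioi_mem_nhds hz)).differentiableAt (by norm_num)).hasDerivAt
  have hc : ConvexOn ℝ (Set.Ioi 0) f := by
    apply convexOn_of_deriv2_nonneg' (convex_Ioi 0)
    · exact hf.differentiableOn (by norm_num)
    · exact fun z hz => (differentiableAt_of_deriv_ne_zero (hf'' z hz).ne').differentiableWithinAt
    · exact fun z hz => (hf'' z hz).le
  rcases lt_trichotomy x y with h | h | h
  · have := hc.le_slope_of_hasDerivAt hx hy h (hd x hx)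
    rw [slope_def_field, le_div_iff₀ (by linarith)] at this
    linarith
  · subst h; simp
  · have := hc.slope_le_of_hasDerivAt hy hx h (hd x hx)
    rw [slope_def_field, div_le_iff₀ (by linarith)] at this
    linarith

/-- Pointwise lower bound. -/
theorem pointwise_aux (f m : ℝ → ℝ)
    (hm : ∀ x y : ℝ, 0 < x → 0 < y → f x + m x * (y - x) ≤ f y) (u v p q : ℝ)
    (hu : 0 < u) (hv : 0 < v) (hp : 0 < p) (hq : 0 < q) :
    q * (f u - u * m u + m v) + p * (f v - v * m v + m u) ≤ q * f (p / q) + p * f (q / p) := by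
  have h1 := mul_le_mul_of_nonneg_left (hm u (p / q) hu (by positivity)) hq.le
  have h2 := mul_le_mul_of_nonneg_left (hm v (q / p) hv (by positivity)) hp.le
  have e1 : q * (f u + m u * (p / q - u)) = q * f u + m u * (p - q * u) := by field_simp
  have e2 : p * (f v + m v * (q / p - v)) = p * f v + m v * (q - p * v) := by field_simp
  rw [e1] at h1
  rw [e2] at h2
  linarith

theorem binDiv_expectation_diff_le_sym_fdiv' {Ω : Type*} [MeasurableSpace Ω]
    (μ : Measure Ω) (f : ℝ → ℝ)
    (hf : ContDiffOn ℝ 2 f (Set.Ioi 0))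
    (hf'' : ∀ x : ℝ, 0 < x → 0 < deriv (deriv f) x)
    (hf1 : f 1 = 0)
    (p q : Ω → ℝ) (hp : Measurable p) (hq : Measurable q)
    (hppos : ∀ ω, 0 < p ω) (hqpos : ∀ ω, 0 < q ω)
    (hpint : ∫ ω, p ω ∂μ = 1) (hqint : ∫ ω, q ω ∂μ = 1)
    (hint : Integrable
      (fun ω => (1 / 2) * (q ω * f (p ω / q ω) + p ω * f (q ω / p ω))) μ)
    (htv : (1 / 2) * ∫ ω, |p ω - q ω| ∂μ < 1)
    (X : Ω → ℝ) (hX : Measurable X)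
    (M : ℝ) (hM : 0 < M) (hXM : ∀ ω, |X ω| ≤ M)
    (hXp : Integrable (fun ω => X ω * p ω) μ)
    (hXq : Integrable (fun ω => X ω * q ω) μ) :
    binDiv f (|(∫ ω, X ω * p ω ∂μ) - ∫ ω, X ω * q ω ∂μ| / (2 * M)) ≤
      (1 / 2) * ∫ ω, (q ω * f (p ω / q ω) + p ω * f (q ω / p ω)) ∂μ := by
  obtain ⟨m, hm⟩ : ∃ m : ℝ → ℝ, ∀ x y : ℝ, 0 < x → 0 < y → f x + m x * (y - x) ≤ f y :=
    ⟨deriv f, fun x y => tangent_le_aux f hf hf'' x y⟩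
  have ip : Integrable p μ := by
    by_contra h
    rw [integral_undef h] at hpint
    norm_num at hpint
  have iq : Integrable q μ := by
    by_contra h
    rw [integral_undef h] at hqint
    norm_num at hqint
  have ih : Integrable (fun ω => q ω * f (p ω / q ω) + p ω * f (q ω / p ω)) μ := by
    have := hint.const_mul 2
    refine this.congr (Filter.Eventually.of_forall fun ω => ?_)
    simp only
    ring
  have iabs : Integrable (fun ω => |p ω - q ω|) μ := (ip.sub iq).abs
  set T := ∫ ω, |p ω - q ω| ∂μ with hT
  set s := |(∫ ω, X ω * p ω ∂μ) - ∫ ω, X ω * q ω ∂μ| / (2 * M) with hs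
  have hs0 : 0 ≤ s := by positivity
  have hsT : s ≤ T / 2 := by
    rw [hs, div_le_iff₀ (by positivity), ← integral_sub hXp hXq]
    calc |∫ ω, (X ω * p ω - X ω * q ω) ∂μ| ≤ ∫ ω, |X ω * p ω - X ω * q ω| ∂μ :=
          abs_integral_le_integral_abs
      _ ≤ ∫ ω, M * |p ω - q ω| ∂μ := by
          refine integral_mono (hXp.sub hXq).abs (iabs.const_mul M) fun ω => ?_
          simp only
          rw [← mul_sub, abs_mul]
          exact mul_le_mul_of_nonneg_right (hXM ω) (abs_nonneg _)
      _ = T / 2 * (2 * M) := by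
          rw [integral_const_mul]
          ring
  have hs1 : s < 1 := by linarith
  clear_value s
  have h1s : 0 < 1 - s := by linarith
  have h1s' : 0 < 1 + s := by linarith
  unfold binDiv
  set u := (1 + s) / (1 - s) with hu
  set v := (1 - s) / (1 + s) with hv
  have hu0 : 0 < u := by positivity
  have hv0 : 0 < v := by positivity
  have huv : v ≤ u := by
    rw [hu, hv, div_le_div_iff₀ h1s' h1s]
    nlinarith
  have eu : (1 - s) * u = 1 + s := by rw [hu]; field_simp
  have ev : (1 + s) * v = 1 - s := by rw [hv]; field_simp
  clear_value u v
  obtain ⟨A, hA⟩ : ∃ A, A = f u - u * m u + m v := ⟨_, rfl⟩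
  obtain ⟨B, hB⟩ : ∃ B, B = f v - v * m v + m u := ⟨_, rfl⟩
  have hAB : A ≤ B := by
    have h1 := hm u v hu0 hv0
    have h2 := hm v u hv0 hu0
    rcases huv.eq_or_lt with h | h
    · rw [hA, hB, h]
    · have h3 : m v ≤ m u := by
        have : m v * (u - v) ≤ m u * (u - v) := by linarith
        exact le_of_mul_le_mul_right this (by linarith)
      have h4 : 0 ≤ (1 + v) * (m u - m v) := mul_nonneg (by linarith) (by linarith)
      rw [hA, hB]
      linarith
  have hpt : ∀ ω, (A + B) / 2 * (p ω + q ω) + (B - A) / 2 * |p ω - q ω| ≤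
      q ω * f (p ω / q ω) + p ω * f (q ω / p ω) := by
    intro ω
    have h1 := pointwise_aux f m hm u v (p ω) (q ω) hu0 hv0 (hppos ω) (hqpos ω)
    have h2 := pointwise_aux f m hm u v (q ω) (p ω) hu0 hv0 (hqpos ω) (hppos ω)
    rw [← hA, ← hB] at h1 h2
    rcases abs_cases (p ω - q ω) with ⟨h, _⟩ | ⟨h, _⟩ <;> rw [h] <;> linarith
  have hI := integral_mono (((ip.add iq).const_mul ((A + B) / 2)).add
    (iabs.const_mul ((B - A) / 2))) ih hpt
  have ipq : Integrable (fun ω => (A + B) / 2 * (p ω + q ω)) μ :=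
    (ip.add iq).const_mul ((A + B) / 2)
  have hE : ∫ ω, ((A + B) / 2 * (p ω + q ω) + (B - A) / 2 * |p ω - q ω|) ∂μ
      = (A + B) + (B - A) / 2 * T := by
    rw [integral_add ipq (iabs.const_mul ((B - A) / 2)),
      integral_const_mul, integral_const_mul, integral_add ip iq, hpint, hqint]
    ring
  have hI' : (A + B) + (B - A) / 2 * T ≤
      ∫ ω, (q ω * f (p ω / q ω) + p ω * f (q ω / p ω)) ∂μ := by
    rw [← hE]
    exact hI
  have hfin : (1 - s) / 2 * f u + (1 + s) / 2 * f v = (A + B) / 2 + s * (B - A) / 2 := by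
    rw [hA, hB]
    linear_combination (m u / 2) * eu + (m v / 2) * ev
  have hlast : 0 ≤ (B - A) * (T / 2 - s) := mul_nonneg (by linarith) (by linarith)
  rw [hfin]
  linarith
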